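/- arXiv:1809.00565 — 5 statements merged into one kernel-verified Lean document; each statement's English description precedes it below -/
import Mathlib

section
/- Let n ≥ 2 and let (V, [·,…,·], S) be a generalized metric n-Leibniz algebra over ℝ. Then for all v₁, …, v_n ∈ V one has Σ_{i=1}^{n-1} [v_i, v₁, …, v_{i-1}, v̂_i, v_{i+1}, …, v_{n-1}, v_n] = 0, where v̂_i means that v_i is omitted (i.e. the bracket has first argument v_i, then v₁,…,v_{n-1} with v_i removed in order, and last argument v_n). -/
open Function

/-!
Write `L u x` for the bracket `[u₁, …, uₙ₋₁, x]`. The symmetry condition, followed by a cyclic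
permutation of the arguments of `S`, gives
`S (L (vᵢ, v₁, …, v̂ᵢ, …, vₙ₋₁) x, w₂, …, wₙ₋₁) = S (v₁, …, L (x, w₂, …, wₙ₋₁) vᵢ, …, vₙ₋₁)`
with `L (x, w₂, …, wₙ₋₁) vᵢ` in position `i`. By the unitarity condition the sum over `i` of the
right-hand sides vanishes, so the sum of the brackets is orthogonal to all `w₂, …, wₙ₋₁` and is
zero by non-degeneracy.
-/

theorem apply_update_eq_apply_cons_removeNth {α β : Type*} {n : ℕ} {f : (Fin (n + 1) → α) → β}
    (hf : ∀ (σ : Equiv.Perm (Fin (n + 1))) (w : Fin (n + 1) → α), f (w ∘ σ) = f w)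
    (v : Fin (n + 1) → α) (i : Fin (n + 1)) (a : α) :
    f (update v i a) = f (Fin.cons a (i.removeNth v)) := by
  rw [← Fin.insertNth_removeNth, ← hf i.cycleRange.symm, Fin.insertNth_comp_cycleRange_symm]

theorem apply_update_zero_cons_removeNth {α β : Type*} {n : ℕ} {f : (Fin (n + 1) → α) → β}
    {L : (Fin (n + 1) → α) → α → α}
    (hf : ∀ (σ : Equiv.Perm (Fin (n + 1))) (w : Fin (n + 1) → α), f (w ∘ σ) = f w)
    (hL : ∀ u v : Fin (n + 1) → α, f (update v 0 (L u (v 0))) = f (update u 0 (L v (u 0))))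
    (v w : Fin (n + 1) → α) (x : α) (i : Fin (n + 1)) :
    f (update w 0 (L (Fin.cons (v i) (i.removeNth v)) x)) =
      f (update v i (L (update w 0 x) (v i))) := by
  have hswap := hL (Fin.cons (v i) (i.removeNth v)) (update w 0 x)
  rw [update_self, update_idem, Fin.cons_zero, Fin.update_cons_zero] at hswap
  rw [hswap, apply_update_eq_apply_cons_removeNth hf]

theorem statement0_general {R V M : Type*} [Semiring R] [AddCommMonoid V] [Module R V]
    [AddCommMonoid M] [Module R M] {n : ℕ} (L : (Fin (n + 1) → V) → V → V)
    (S : MultilinearMap R (fun _ : Fin (n + 1) => V) M)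
    (hsymm : ∀ (σ : Equiv.Perm (Fin (n + 1))) (w : Fin (n + 1) → V), S (w ∘ σ) = S w)
    (hnondeg : ∀ u : V, (∀ w : Fin (n + 1) → V, S (update w 0 u) = 0) → u = 0)
    (hunit : ∀ u w : Fin (n + 1) → V, ∑ i, S (update w i (L u (w i))) = 0)
    (hL : ∀ u v : Fin (n + 1) → V, S (update v 0 (L u (v 0))) = S (update u 0 (L v (u 0))))
    (v : Fin (n + 1) → V) (x : V) :
    ∑ i, L (Fin.cons (v i) (i.removeNth v)) x = 0 := by
  refine hnondeg _ fun w => ?_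
  calc S (update w 0 (∑ i, L (Fin.cons (v i) (i.removeNth v)) x))
      = ∑ i, S (update w 0 (L (Fin.cons (v i) (i.removeNth v)) x)) :=
        S.map_update_sum Finset.univ 0 _ w
    _ = ∑ i, S (update v i (L (update w 0 x) (v i))) :=
        Finset.sum_congr rfl fun i _ => apply_update_zero_cons_removeNth hsymm hL v w x i
    _ = 0 := hunit _ _

/-- Let `n = m + 2 ≥ 2` and let `(V, [·,…,·], S)` be a generalized metric
`n`-Leibniz algebra over `ℝ`: the `n`-linear bracket `br` satisfies the fundamental identity,
and the `(n-1)`-linear form `S` is symmetric, non-degenerate and satisfies the unitarity and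
symmetry conditions.  Then for all `v₁, …, v_{n-1} ∈ V` and `v_n ∈ V`,
`Σ_{i=1}^{n-1} [v_i, v₁, …, v̂_i, …, v_{n-1}, v_n] = 0`. -/
theorem statement0 (m : ℕ) {V : Type*} [AddCommGroup V] [Module ℝ V]
    (br : MultilinearMap ℝ (fun _ : Fin (m + 2) => V) V)
    (S : MultilinearMap ℝ (fun _ : Fin (m + 1) => V) ℝ)
    -- fundamental identity
    (hFI : ∀ (u : Fin (m + 1) → V) (v : Fin (m + 2) → V),
      br (Fin.snoc u (br v)) =
        ∑ i : Fin (m + 2), br (Function.update v i (br (Fin.snoc u (v i)))))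
    -- `S` is symmetric
    (hSsymm : ∀ (σ : Equiv.Perm (Fin (m + 1))) (w : Fin (m + 1) → V), S (w ∘ σ) = S w)
    -- `S` is non-degenerate
    (hSnd : ∀ u : V, (∀ w : Fin (m + 1) → V, S (Function.update w 0 u) = 0) → u = 0)
    -- unitarity condition
    (hUnit : ∀ (u w : Fin (m + 1) → V),
      ∑ i : Fin (m + 1), S (Function.update w i (br (Fin.snoc u (w i)))) = 0)
    -- symmetry condition
    (hSymCond : ∀ (u v : Fin (m + 1) → V),
      S (Function.update v 0 (br (Fin.snoc u (v 0)))) =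
        S (Function.update u 0 (br (Fin.snoc v (u 0))))) :
    ∀ (v : Fin (m + 1) → V) (vn : V),
      ∑ i : Fin (m + 1),
        br (Fin.snoc (Fin.cons (v i) (fun j : Fin m => v (i.succAbove j)) : Fin (m + 1) → V) vn)
          = 0 := by
  exact statement0_general (fun u x => br (Fin.snoc u x)) S hSsymm hSnd hUnit hSymCond
end

section
/- Let n ≥ 2 and let (V, [·,…,·], S) be a finite-dimensional generalized metric n-Leibniz algebra over ℝ, with D(u₁,…,u_{n-1}) ∈ gl(V) defined by D(u₁,…,u_{n-1})v = [u₁,…,u_{n-1},v], and let g be the linear span of {D(u₁,…,u_{n-1}) : u_i ∈ V} in gl(V). Then there exists a bilinear form ω on g such that ω(D(u₁,…,u_{n-1}), D(v₁,…,v_{n-1})) = S([u₁,…,u_{n-1},v₁], v₂,…,v_{n-1}) for all u₁,…,u_{n-1},v₁,…,v_{n-1} ∈ V, and this ω is symmetric, non-degenerate, and ad-invariant (ω([x,y],z) = −ω(y,[x,z]) for all x,y,z ∈ g); hence (g, [·,·], ω) is a metric Lie algebra. -/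
open Function

/-- The operator `D(u₁,…,u_{n-1}) ∈ gl(V)`, `D(u₁,…,u_{n-1})v = [u₁,…,u_{n-1},v]`. -/
noncomputable def Dop (m : ℕ) {V : Type*} [AddCommGroup V] [Module ℝ V]
    (br : MultilinearMap ℝ (fun _ : Fin (m + 2) => V) V)
    (u : Fin (m + 1) → V) : Module.End ℝ V where
  toFun v := br (Fin.snoc u v)
  map_add' x y := by
    simpa [Fin.update_snoc_last] using br.map_update_add (Fin.snoc u x) (Fin.last (m + 1)) x y
  map_smul' c x := by
    simpa [Fin.update_snoc_last] using br.map_update_smul (Fin.snoc u x) (Fin.last (m + 1)) c x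

/-- The linear span `g` of `{D(u₁,…,u_{n-1})}` inside `gl(V)`. -/
noncomputable def gSpan (m : ℕ) {V : Type*} [AddCommGroup V] [Module ℝ V]
    (br : MultilinearMap ℝ (fun _ : Fin (m + 2) => V) V) :
    Submodule ℝ (Module.End ℝ V) :=
  Submodule.span ℝ (Set.range (Dop m br))

/-!
Write `φ_v` for the functional `x ↦ S(x v₁, v₂, …, v_{n-1})` on `gl(V)`. The symmetry condition
says `φ_v (D u) = φ_u (D v)`, so a linear relation among the `D u` is also satisfied by the `φ_u`
restricted to `g`, and `D u ↦ φ_u` extends to a well-defined symmetric form `ω` on `g` with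
`ω(x, D v) = φ_v x`. Non-degeneracy of `ω` is then that of `S`. For `x ∈ g` the fundamental
identity expands `[x, D w]`, and the unitarity condition expands `φ_w [x, y]`, by applying `x` to
one entry of `w` at a time; comparing the two sums gives ad-invariance.
-/

section MetricLieAlgebra

attribute [local instance] LieRing.ofAssociativeRing

variable {R : Type*} [CommRing R]

section SpanningForm

variable {M ι : Type*} [AddCommGroup M] [Module R M] {a : ι → M} {φ : ι → M →ₗ[R] R}

theorem ker_linearCombination_le_of_symm (ha : Submodule.span R (Set.range a) = ⊤)
    (h : ∀ i j, φ j (a i) = φ i (a j)) :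
    LinearMap.ker (Finsupp.linearCombination R a) ≤
      LinearMap.ker (Finsupp.linearCombination R φ) := by
  have eval_eq (f : ι →₀ R) (j : ι) :
      Finsupp.linearCombination R φ f (a j) = φ j (Finsupp.linearCombination R a f) := by
    simp only [Finsupp.linearCombination_apply, Finsupp.sum, LinearMap.sum_apply,
      LinearMap.smul_apply, map_sum, map_smul, h]
  intro f hf
  refine LinearMap.ext_on_range ha fun j => ?_
  rw [eval_eq, LinearMap.mem_ker.mp hf, map_zero, LinearMap.zero_apply]

/-- The bilinear form on `M` determined by prescribing the functionals `φ i` it pairs with the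
members `a i` of a spanning family. The symmetry hypothesis on `φ` and `a` makes it well defined. -/
noncomputable def spanningForm (ha : Submodule.span R (Set.range a) = ⊤)
    (h : ∀ i j, φ j (a i) = φ i (a j)) : LinearMap.BilinForm R M :=
  (LinearMap.ker _).liftQ _ (ker_linearCombination_le_of_symm ha h) ∘ₗ
    ((Finsupp.linearCombination R a).quotKerEquivOfSurjective
      ((span_range_eq_top_iff_surjective_finsuppLinearCombination ..).mp ha)).symm.toLinearMap

variable (ha : Submodule.span R (Set.range a) = ⊤) (h : ∀ i j, φ j (a i) = φ i (a j))

theorem spanningForm_apply_left (i : ι) : spanningForm ha h (a i) = φ i := by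
  have symm_apply_eq_mk : ((Finsupp.linearCombination R a).quotKerEquivOfSurjective
      ((span_range_eq_top_iff_surjective_finsuppLinearCombination ..).mp ha)).symm (a i) =
      Submodule.Quotient.mk (Finsupp.single i 1) := by
    rw [LinearEquiv.symm_apply_eq]
    simp
  simp [spanningForm, symm_apply_eq_mk]

theorem spanningForm_isSymm : (spanningForm ha h).IsSymm := by
  have flip_eq : spanningForm ha h = LinearMap.flip (spanningForm ha h) := by
    refine LinearMap.ext_on_range ha fun i => LinearMap.ext_on_range ha fun j => ?_
    rw [LinearMap.flip_apply, spanningForm_apply_left, spanningForm_apply_left, h]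
  exact ⟨fun x y => LinearMap.congr_fun₂ flip_eq x y⟩

theorem spanningForm_apply_right (x : M) (j : ι) : spanningForm ha h x (a j) = φ j x := by
  rw [(spanningForm_isSymm ha h).eq, spanningForm_apply_left]

end SpanningForm

variable {V N ι : Type*} [AddCommGroup V] [Module R V] [AddCommGroup N] [Module R N]
  [DecidableEq ι]

/-- The linear map `φ_w : x ↦ S(…, x (w i₀), …)` obtained by letting an endomorphism act on the
entry `i₀` of `w` before evaluating `S`. -/
def slotPairing (S : MultilinearMap R (fun _ : ι => V) N) (i₀ : ι) (w : ι → V) :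
    Module.End R V →ₗ[R] N :=
  S.toLinearMap w i₀ ∘ₗ LinearMap.applyₗ (w i₀)

theorem slotPairing_apply (S : MultilinearMap R (fun _ : ι => V) N) (i₀ : ι) (w : ι → V)
    (x : Module.End R V) : slotPairing S i₀ w x = S (update w i₀ (x (w i₀))) :=
  rfl

variable [Fintype ι]

/-- The sum over all slots `i` of `f` evaluated at `w` with an endomorphism applied to the entry
`i`, i.e. the natural action of `gl(V)` on `V^⊗ι` composed with `f`; linear in the endomorphism. -/
def leibnizSum (f : MultilinearMap R (fun _ : ι => V) N) (w : ι → V) : Module.End R V →ₗ[R] N :=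
  ∑ i, slotPairing f i w

theorem leibnizSum_apply (f : MultilinearMap R (fun _ : ι => V) N) (w : ι → V)
    (x : Module.End R V) : leibnizSum f w x = ∑ i, f (update w i (x (w i))) := by
  simp only [leibnizSum, LinearMap.sum_apply, slotPairing_apply]

theorem slotPairing_lie {S : MultilinearMap R (fun _ : ι => V) N} {x : Module.End R V}
    (hx : ∀ w, leibnizSum S w x = 0) (i₀ : ι) (w : ι → V) (y : Module.End R V) :
    slotPairing S i₀ w ⁅x, y⁆ = -∑ i, slotPairing S i₀ (update w i (x (w i))) y := by
  have unitarity := hx (update w i₀ (y (w i₀)))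
  have other_slots : ∀ i ∈ Finset.univ.erase i₀,
      S (update (update w i₀ (y (w i₀))) i (x (update w i₀ (y (w i₀)) i))) =
        slotPairing S i₀ (update w i (x (w i))) y := fun i hi => by
    have hne : i ≠ i₀ := Finset.ne_of_mem_erase hi
    rw [slotPairing_apply, update_of_ne hne, update_of_ne hne.symm, update_comm hne]
  rw [leibnizSum_apply, ← Finset.add_sum_erase _ _ (Finset.mem_univ i₀),
    Finset.sum_congr rfl other_slots, update_self, update_idem] at unitarity
  rw [← Finset.add_sum_erase _ _ (Finset.mem_univ i₀), LieRing.of_associative_ring_bracket, map_sub,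
    eq_neg_of_add_eq_zero_right unitarity]
  simp only [slotPairing_apply, Module.End.mul_apply, update_self, update_idem]
  abel

/-- The fundamental identity for a multilinear family of operators `D(u)`, in commutator form:
bracketing with `D u` acts on `D` as a derivation. For the operators of an `n`-Leibniz algebra it is
the fundamental identity of the bracket, see `fundamentalIdentity_curryRight`. -/
def FundamentalIdentity (D : MultilinearMap R (fun _ : ι => V) (Module.End R V)) : Prop :=
  ∀ u w, ⁅D u, D w⁆ = leibnizSum D w (D u)

theorem fundamentalIdentity_curryRight {k : ℕ}
    {br : MultilinearMap R (fun _ : Fin (k + 1) => V) V}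
    (hFI : ∀ (u : Fin k → V) (v : Fin (k + 1) → V),
      br (Fin.snoc u (br v)) = ∑ i, br (update v i (br (Fin.snoc u (v i))))) :
    FundamentalIdentity br.curryRight := by
  intro u w
  ext v
  have expansion := hFI u (Fin.snoc w v)
  simp only [Fin.sum_univ_castSucc, Fin.snoc_castSucc, Fin.snoc_last, Fin.update_snoc_last,
    ← Fin.snoc_update] at expansion
  rw [leibnizSum_apply, LinearMap.sum_apply, LieRing.of_associative_ring_bracket,
    LinearMap.sub_apply, sub_eq_iff_eq_add]
  exact expansion

section InnerDerivations

variable {D : MultilinearMap R (fun _ : ι => V) (Module.End R V)}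

theorem FundamentalIdentity.lie_eq_leibnizSum (hD : FundamentalIdentity D) {x : Module.End R V}
    (hx : x ∈ Submodule.span R (Set.range D)) (w : ι → V) : ⁅x, D w⁆ = leibnizSum D w x := by
  induction hx using Submodule.span_induction with
  | mem x h =>
    obtain ⟨u, rfl⟩ := h
    exact hD u w
  | zero => rw [zero_lie, map_zero]
  | add x y _ _ hx hy => rw [add_lie, hx, hy, map_add]
  | smul c x _ hx => rw [smul_lie, hx, map_smul]

theorem leibnizSum_eq_zero_of_mem_span {S : MultilinearMap R (fun _ : ι => V) N}
    (hUnit : ∀ u w, leibnizSum S w (D u) = 0) {x : Module.End R V}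
    (hx : x ∈ Submodule.span R (Set.range D)) (w : ι → V) : leibnizSum S w x = 0 := by
  have span_le : Submodule.span R (Set.range D) ≤ LinearMap.ker (leibnizSum S w) :=
    Submodule.span_le.mpr (Set.range_subset_iff.mpr fun u => hUnit u w)
  exact span_le hx

/-- The Lie algebra `g` spanned by the operators `D u`. -/
def innerDerivations (hD : FundamentalIdentity D) : LieSubalgebra R (Module.End R V) where
  __ := Submodule.span R (Set.range D)
  lie_mem' {x y} hx hy := by
    induction hy using Submodule.span_induction with
    | mem y h =>
      obtain ⟨w, rfl⟩ := h
      rw [hD.lie_eq_leibnizSum hx, leibnizSum_apply]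
      exact Submodule.sum_mem _ fun i _ => Submodule.subset_span ⟨_, rfl⟩
    | zero => rw [lie_zero]; exact Submodule.zero_mem _
    | add y z _ _ hy hz => rw [lie_add]; exact Submodule.add_mem _ hy hz
    | smul c y _ hy => rw [lie_smul]; exact Submodule.smul_mem _ c hy

/-- The operator `D u` as an element of the Lie algebra `g`. -/
def innerDerivation (hD : FundamentalIdentity D) (u : ι → V) : innerDerivations hD :=
  ⟨D u, Submodule.subset_span ⟨u, rfl⟩⟩

theorem span_range_innerDerivation (hD : FundamentalIdentity D) :
    Submodule.span R (Set.range (innerDerivation hD)) = ⊤ :=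
  (Submodule.span_range_subtype_eq_top_iff (innerDerivations hD).toSubmodule _).mpr rfl

theorem lie_innerDerivation (hD : FundamentalIdentity D) (x : innerDerivations hD) (w : ι → V) :
    ⁅x, innerDerivation hD w⁆ = ∑ i, innerDerivation hD (update w i (x.1 (w i))) := by
  apply Subtype.ext
  rw [AddSubmonoidClass.coe_finsetSum]
  exact (hD.lie_eq_leibnizSum x.2 w).trans (leibnizSum_apply D w x)

variable (hD : FundamentalIdentity D) {S : MultilinearMap R (fun _ : ι => V) R} {i₀ : ι}
  (hSymCond : ∀ u v, slotPairing S i₀ v (D u) = slotPairing S i₀ u (D v))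

/-- The form `ω` on `g` with `ω(x, D v) = S(…, x (v i₀), …)`. -/
noncomputable def innerForm : LinearMap.BilinForm R (innerDerivations hD) :=
  spanningForm (span_range_innerDerivation hD)
    (φ := fun v => slotPairing S i₀ v ∘ₗ (innerDerivations hD).toSubmodule.subtype) hSymCond

theorem innerForm_apply_innerDerivation (x : innerDerivations hD) (v : ι → V) :
    innerForm hD hSymCond x (innerDerivation hD v) = slotPairing S i₀ v x :=
  spanningForm_apply_right _ _ x v

theorem innerForm_isSymm : (innerForm hD hSymCond).IsSymm :=
  spanningForm_isSymm _ _

theorem innerForm_nondegenerate (hSnd : ∀ a, (∀ w, S (update w i₀ a) = 0) → a = 0) :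
    (innerForm hD hSymCond).Nondegenerate := by
  refine (innerForm_isSymm hD hSymCond).isRefl.nondegenerate_iff_separatingLeft.mpr fun x hx => ?_
  refine Subtype.ext (LinearMap.ext fun a => hSnd _ fun w => ?_)
  calc S (update w i₀ (x.1 a)) = slotPairing S i₀ (update w i₀ a) x := by
        rw [slotPairing_apply, update_self, update_idem]
    _ = 0 := by rw [← innerForm_apply_innerDerivation hD hSymCond, hx]

theorem innerForm_lieInvariant (hUnit : ∀ u w, leibnizSum S w (D u) = 0) :
    (innerForm hD hSymCond).lieInvariant (innerDerivations hD) := by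
  intro x y
  let ω := innerForm hD hSymCond
  suffices h : ω ⁅x, y⁆ = -(ω y ∘ₗ (LieAlgebra.ad R _ x)) from LinearMap.congr_fun h
  refine LinearMap.ext_on_range (span_range_innerDerivation hD) fun w => ?_
  calc ω ⁅x, y⁆ (innerDerivation hD w)
      = slotPairing S i₀ w ⁅x.1, y.1⁆ := innerForm_apply_innerDerivation hD hSymCond _ w
    _ = -∑ i, slotPairing S i₀ (update w i (x.1 (w i))) y :=
        slotPairing_lie (leibnizSum_eq_zero_of_mem_span hUnit x.2) i₀ w y
    _ = -ω y ⁅x, innerDerivation hD w⁆ := by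
        simp only [lie_innerDerivation, map_sum, ω, innerForm_apply_innerDerivation]

end InnerDerivations

theorem statement3_general {m : ℕ} (br : MultilinearMap R (fun _ : Fin (m + 2) => V) V)
    (S : MultilinearMap R (fun _ : Fin (m + 1) => V) R)
    (hFI : ∀ (u : Fin (m + 1) → V) (v : Fin (m + 2) → V),
      br (Fin.snoc u (br v)) = ∑ i, br (update v i (br (Fin.snoc u (v i)))))
    (hSnd : ∀ u : V, (∀ w : Fin (m + 1) → V, S (update w 0 u) = 0) → u = 0)
    (hUnit : ∀ u w : Fin (m + 1) → V, ∑ i, S (update w i (br (Fin.snoc u (w i)))) = 0)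
    (hSymCond : ∀ u v : Fin (m + 1) → V,
      S (update v 0 (br (Fin.snoc u (v 0)))) = S (update u 0 (br (Fin.snoc v (u 0))))) :
    let hD := fundamentalIdentity_curryRight hFI
    ∃ ω : LinearMap.BilinForm R (innerDerivations hD),
      (∀ u v, ω (innerDerivation hD u) (innerDerivation hD v) =
        S (update v 0 (br (Fin.snoc u (v 0))))) ∧
      ω.IsSymm ∧ ω.Nondegenerate ∧ ω.lieInvariant (innerDerivations hD) := by
  intro hD
  have hUnit' (u w) : leibnizSum S w (br.curryRight u) = 0 :=
    (leibnizSum_apply ..).trans (hUnit u w)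
  exact ⟨innerForm hD hSymCond,
    fun u v => innerForm_apply_innerDerivation hD hSymCond (innerDerivation hD u) v,
    innerForm_isSymm hD hSymCond,
    innerForm_nondegenerate hD hSymCond hSnd,
    innerForm_lieInvariant hD hSymCond hUnit'⟩

end MetricLieAlgebra

/-- Let `n = m + 2 ≥ 2` and let `(V, [·,…,·], S)` be a finite-dimensional
generalized metric `n`-Leibniz algebra over `ℝ`, and let `g` be the span of the operators
`D(u₁,…,u_{n-1})` in `gl(V)`.  Then there is a bilinear form `ω` on `g` with
`ω(D(u₁,…,u_{n-1}), D(v₁,…,v_{n-1})) = S([u₁,…,u_{n-1},v₁], v₂,…,v_{n-1})`, and `ω` is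
symmetric, non-degenerate and ad-invariant; hence `(g, [·,·], ω)` is a metric Lie algebra. -/
theorem statement3 (m : ℕ) {V : Type*} [AddCommGroup V] [Module ℝ V] [FiniteDimensional ℝ V]
    (br : MultilinearMap ℝ (fun _ : Fin (m + 2) => V) V)
    (S : MultilinearMap ℝ (fun _ : Fin (m + 1) => V) ℝ)
    -- fundamental identity
    (hFI : ∀ (u : Fin (m + 1) → V) (v : Fin (m + 2) → V),
      br (Fin.snoc u (br v)) =
        ∑ i : Fin (m + 2), br (Function.update v i (br (Fin.snoc u (v i)))))
    -- `S` is symmetric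
    (hSsymm : ∀ (σ : Equiv.Perm (Fin (m + 1))) (w : Fin (m + 1) → V), S (w ∘ σ) = S w)
    -- `S` is non-degenerate
    (hSnd : ∀ u : V, (∀ w : Fin (m + 1) → V, S (Function.update w 0 u) = 0) → u = 0)
    -- unitarity condition
    (hUnit : ∀ (u w : Fin (m + 1) → V),
      ∑ i : Fin (m + 1), S (Function.update w i (br (Fin.snoc u (w i)))) = 0)
    -- symmetry condition
    (hSymCond : ∀ (u v : Fin (m + 1) → V),
      S (Function.update v 0 (br (Fin.snoc u (v 0)))) =
        S (Function.update u 0 (br (Fin.snoc v (u 0))))) :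
    ∃ ω : (gSpan m br : Submodule ℝ (Module.End ℝ V)) →ₗ[ℝ]
        (gSpan m br : Submodule ℝ (Module.End ℝ V)) →ₗ[ℝ] ℝ,
      -- the defining property of `ω`
      (∀ u v : Fin (m + 1) → V,
        ω ⟨Dop m br u, Submodule.subset_span ⟨u, rfl⟩⟩
            ⟨Dop m br v, Submodule.subset_span ⟨v, rfl⟩⟩ =
          S (Function.update v 0 (br (Fin.snoc u (v 0))))) ∧
      -- `ω` is symmetric
      (∀ x y, ω x y = ω y x) ∧
      -- `ω` is non-degenerate
      (∀ x, (∀ y, ω x y = 0) → x = 0) ∧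
      -- `ω` is ad-invariant: `ω([x,y],z) = −ω(y,[x,z])`
      (∀ (x y z : gSpan m br)
          (hxy : ⁅(x : Module.End ℝ V), (y : Module.End ℝ V)⁆ ∈ gSpan m br)
          (hxz : ⁅(x : Module.End ℝ V), (z : Module.End ℝ V)⁆ ∈ gSpan m br),
        ω ⟨⁅(x : Module.End ℝ V), (y : Module.End ℝ V)⁆, hxy⟩ z =
          - ω y ⟨⁅(x : Module.End ℝ V), (z : Module.End ℝ V)⁆, hxz⟩) := by
  obtain ⟨ω, hω, hsymm, hnd, hinv⟩ := statement3_general br S hFI hSnd hUnit hSymCond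
  exact ⟨ω, hω, hsymm.eq, hnd.1, fun x y z _ _ => hinv x y z⟩
end

section
/- Let n ≥ 2 and let (V, [·,…,·], S) be a generalized metric n-Leibniz algebra over ℝ. Let B be the bilinear form on the (n−1)-fold tensor power T = V ⊗ ⋯ ⊗ V determined on pure tensors by B(u₁⊗⋯⊗u_{n-1}, v₁⊗⋯⊗v_{n-1}) = S([u₁,…,u_{n-1},v₁], v₂,…,v_{n-1}), and let [·,·]_F be the bracket on T determined on pure tensors by [u₁⊗⋯⊗u_{n-1}, v₁⊗⋯⊗v_{n-1}]_F = Σ_{i=1}^{n-1} v₁⊗⋯⊗[u₁,…,u_{n-1},v_i]⊗⋯⊗v_{n-1}. Then B is symmetric (B(U,W) = B(W,U)) and associative-invariant: B(U, [W,Z]_F) = B([U,W]_F, Z) for all U, W, Z ∈ T. -/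
open Function

/-!
Left multiplication extends to a linear map `U ↦ L_U` from `T` to `End V`. An endomorphism `a` of
`V` acts on `T` in two ways: on a single factor, by `a_i`, and by the derivation `ρ(a) = ∑ i, a_i`.
These satisfy `⁅a_i, ρ(b)⁆ = ⁅a, b⁆_i`, as operators on different factors commute. Extending `S`
linearly to `T`, we have `[U, W]_F = ρ(L_U) W` and `B(U, W) = S((L_U)₀ W)`; the fundamental
identity says `L_{[U, W]_F} = ⁅L_U, L_W⁆` and unitarity says `S ∘ ρ(L_W) = 0`. Hence
`B([U, W]_F, Z) = S(⁅(L_U)₀, ρ(L_W)⁆ Z) = S((L_U)₀ (ρ(L_W) Z)) = B(U, [W, Z]_F)`.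
-/

open scoped TensorProduct

section Ext

variable {R ι ι' M : Type*} [CommSemiring R] {V : ι → Type*} {V' : ι' → Type*}
  [∀ i, AddCommMonoid (V i)] [∀ i, Module R (V i)] [∀ i, AddCommMonoid (V' i)]
  [∀ i, Module R (V' i)] [AddCommMonoid M] [Module R M]

theorem bilinear_ext_tprod {f g : (⨂[R] i, V i) →ₗ[R] (⨂[R] i, V' i) →ₗ[R] M}
    (h : ∀ u v, f (PiTensorProduct.tprod R u) (PiTensorProduct.tprod R v) =
      g (PiTensorProduct.tprod R u) (PiTensorProduct.tprod R v)) : f = g := by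
  ext u v
  exact h u v

end Ext

section FactorAction

variable {R ι V : Type*} [CommSemiring R] [AddCommMonoid V] [Module R V] [DecidableEq ι]

/-- The operator on the tensor power `⨂[R] _ : ι, V` that applies an endomorphism of `V` to the
factor with index `i` and leaves the other factors alone. -/
noncomputable def factorAction (i : ι) :
    Module.End R V →ₗ[R] Module.End R (⨂[R] _ : ι, V) :=
  (PiTensorProduct.mapMultilinear R (fun _ : ι => V) (fun _ => V)).toLinearMap 1 i

theorem factorAction_eq_mapMonoidHom (i : ι) (a : Module.End R V) :
    factorAction i a = PiTensorProduct.mapMonoidHom (Pi.mulSingle i a) :=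
  rfl

theorem factorAction_tprod (i : ι) (a : Module.End R V) (v : ι → V) :
    factorAction i a (PiTensorProduct.tprod R v) =
      PiTensorProduct.tprod R (update v i (a (v i))) := by
  have hfactors : (fun j => update (1 : ι → Module.End R V) i a j (v j)) =
      update v i (a (v i)) :=
    funext fun j => apply_update (fun k (f : Module.End R V) => f (v k)) 1 i a j
  rw [← hfactors]
  exact PiTensorProduct.map_tprod (update (1 : ι → Module.End R V) i a) v

theorem factorAction_mul (i : ι) (a b : Module.End R V) :
    factorAction i (a * b) = factorAction i a * factorAction i b := by
  simp only [factorAction_eq_mapMonoidHom, Pi.mulSingle_mul, map_mul]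

theorem commute_factorAction {i j : ι} (hij : i ≠ j) (a b : Module.End R V) :
    Commute (factorAction i a) (factorAction j b) := by
  rw [factorAction_eq_mapMonoidHom, factorAction_eq_mapMonoidHom]
  exact Commute.map (Pi.mulSingle_commute (f := fun _ : ι => Module.End R V) hij a b) _

variable [Fintype ι]

/-- The natural representation of the Lie algebra `End V` on the tensor power `⨂[R] _ : ι, V`: an
endomorphism of `V` acts as a derivation, that is by the sum of its actions on the factors. -/
noncomputable def derivationAction : Module.End R V →ₗ[R] Module.End R (⨂[R] _ : ι, V) :=
  ∑ i, factorAction i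

theorem derivationAction_tprod (a : Module.End R V) (v : ι → V) :
    derivationAction a (PiTensorProduct.tprod R v) =
      ∑ i, PiTensorProduct.tprod R (update v i (a (v i))) := by
  simp only [derivationAction, LinearMap.sum_apply, factorAction_tprod]

end FactorAction

section TensorPower

variable {R V M : Type*} [CommSemiring R] [AddCommMonoid V] [Module R V] [AddCommMonoid M]
  [Module R M] {m : ℕ}

/-- Left multiplication `u₁ ⊗ ⋯ ⊗ u_{n-1} ↦ [u₁, …, u_{n-1}, ·]` of an `n`-ary bracket, extended
linearly to the tensor power; here `n = m + 2`. -/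
noncomputable def leftMultiplication (br : MultilinearMap R (fun _ : Fin (m + 2) => V) V) :
    (⨂[R] _ : Fin (m + 1), V) →ₗ[R] Module.End R V :=
  PiTensorProduct.lift br.curryRight

/-- The bracket `[·,·]_F` on the tensor power: left multiplication acting by derivations. -/
noncomputable def tensorBracket (br : MultilinearMap R (fun _ : Fin (m + 2) => V) V) :
    (⨂[R] _ : Fin (m + 1), V) →ₗ[R] (⨂[R] _ : Fin (m + 1), V) →ₗ[R] ⨂[R] _ : Fin (m + 1), V :=
  derivationAction ∘ₗ leftMultiplication br

/-- The form `B` on the tensor power: left multiplication acting on the first factor, followed by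
`S`. -/
noncomputable def tensorForm (br : MultilinearMap R (fun _ : Fin (m + 2) => V) V)
    (S : MultilinearMap R (fun _ : Fin (m + 1) => V) M) :
    (⨂[R] _ : Fin (m + 1), V) →ₗ[R] (⨂[R] _ : Fin (m + 1), V) →ₗ[R] M :=
  (factorAction 0 ∘ₗ leftMultiplication br).compr₂ (PiTensorProduct.lift S)

variable {br : MultilinearMap R (fun _ : Fin (m + 2) => V) V}
  {S : MultilinearMap R (fun _ : Fin (m + 1) => V) M}

theorem leftMultiplication_tprod (u : Fin (m + 1) → V) (x : V) :
    leftMultiplication br (PiTensorProduct.tprod R u) x = br (Fin.snoc u x) := by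
  rw [leftMultiplication, PiTensorProduct.lift.tprod, MultilinearMap.curryRight_apply]

theorem tensorBracket_tprod (u v : Fin (m + 1) → V) :
    tensorBracket br (PiTensorProduct.tprod R u) (PiTensorProduct.tprod R v) =
      ∑ i, PiTensorProduct.tprod R (update v i (br (Fin.snoc u (v i)))) := by
  simp only [tensorBracket, LinearMap.comp_apply, derivationAction_tprod, leftMultiplication_tprod]

theorem tensorForm_tprod (u v : Fin (m + 1) → V) :
    tensorForm br S (PiTensorProduct.tprod R u) (PiTensorProduct.tprod R v) =
      S (update v 0 (br (Fin.snoc u (v 0)))) := by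
  simp only [tensorForm, LinearMap.compr₂_apply, LinearMap.comp_apply, factorAction_tprod,
    leftMultiplication_tprod, PiTensorProduct.lift.tprod]

theorem tensorForm_comm
    (hSymCond : ∀ u v : Fin (m + 1) → V,
      S (update v 0 (br (Fin.snoc u (v 0)))) = S (update u 0 (br (Fin.snoc v (u 0)))))
    (U W : ⨂[R] _ : Fin (m + 1), V) : tensorForm br S U W = tensorForm br S W U := by
  have hflip : tensorForm br S = (tensorForm br S).flip := bilinear_ext_tprod fun u v => by
    rw [LinearMap.flip_apply, tensorForm_tprod, tensorForm_tprod, hSymCond]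
  exact LinearMap.congr_fun₂ hflip U W

theorem lift_comp_derivationAction_leftMultiplication_eq_zero
    (hUnit : ∀ u w : Fin (m + 1) → V, ∑ i, S (update w i (br (Fin.snoc u (w i)))) = 0)
    (U : ⨂[R] _ : Fin (m + 1), V) :
    PiTensorProduct.lift S ∘ₗ derivationAction (leftMultiplication br U) = 0 := by
  have hzero : (tensorBracket br).compr₂ (PiTensorProduct.lift S) = 0 :=
    bilinear_ext_tprod fun u w => by
      simp only [LinearMap.compr₂_apply, tensorBracket_tprod, map_sum, PiTensorProduct.lift.tprod,
        hUnit, LinearMap.zero_apply]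
  exact LinearMap.congr_fun hzero U

end TensorPower

section Commutator

variable {R ι V M : Type*} [CommRing R] [AddCommGroup V] [Module R V] [AddCommGroup M] [Module R M]

section FactorAction

variable [DecidableEq ι]

theorem factorAction_lie (i : ι) (a b : Module.End R V) :
    factorAction i ⁅a, b⁆ = ⁅factorAction i a, factorAction i b⁆ := by
  simp only [Ring.lie_def, map_sub, factorAction_mul]

variable [Fintype ι]

theorem lie_factorAction_derivationAction (i : ι) (a b : Module.End R V) :
    ⁅factorAction i a, derivationAction (ι := ι) b⁆ = factorAction i ⁅a, b⁆ := by
  have hsum : ⁅factorAction i a, derivationAction (ι := ι) b⁆ =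
      ∑ j, ⁅factorAction i a, factorAction j b⁆ := by
    simp only [derivationAction, LinearMap.sum_apply, Ring.lie_def, Finset.mul_sum, Finset.sum_mul,
      Finset.sum_sub_distrib]
  rw [hsum, factorAction_lie]
  exact Fintype.sum_eq_single i fun j hji => (commute_factorAction hji.symm a b).lie_eq

theorem map_factorAction_lie_of_comp_derivationAction_eq_zero
    {φ : (⨂[R] _ : ι, V) →ₗ[R] M} {b : Module.End R V} (hφ : φ ∘ₗ derivationAction b = 0)
    (i : ι) (a : Module.End R V) (Z : ⨂[R] _ : ι, V) :
    φ (factorAction i ⁅a, b⁆ Z) = φ (factorAction i a (derivationAction b Z)) := by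
  have hvanish : φ (derivationAction b (factorAction i a Z)) = 0 := LinearMap.congr_fun hφ _
  rw [← lie_factorAction_derivationAction, Ring.lie_def, LinearMap.sub_apply, Module.End.mul_apply,
    Module.End.mul_apply, map_sub, hvanish, sub_zero]

end FactorAction

variable {m : ℕ} {br : MultilinearMap R (fun _ : Fin (m + 2) => V) V}
  {S : MultilinearMap R (fun _ : Fin (m + 1) => V) M}

theorem leftMultiplication_tensorBracket
    (hFI : ∀ (u : Fin (m + 1) → V) (v : Fin (m + 2) → V),
      br (Fin.snoc u (br v)) = ∑ i, br (update v i (br (Fin.snoc u (v i)))))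
    (U W : ⨂[R] _ : Fin (m + 1), V) :
    leftMultiplication br (tensorBracket br U W) =
      ⁅leftMultiplication br U, leftMultiplication br W⁆ := by
  let commutator := LinearMap.mul R (Module.End R V) - (LinearMap.mul R (Module.End R V)).flip
  have hbilinear : (tensorBracket br).compr₂ (leftMultiplication br) =
      commutator.compl₁₂ (leftMultiplication br) (leftMultiplication br) :=
    bilinear_ext_tprod fun u w => LinearMap.ext fun x => by
      have hFI_snoc := hFI u (Fin.snoc w x)
      rw [Fin.sum_univ_castSucc] at hFI_snoc
      simp only [Fin.snoc_castSucc, Fin.snoc_last, Fin.update_snoc_last, ← Fin.snoc_update]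
        at hFI_snoc
      simp only [commutator, LinearMap.compr₂_apply, tensorBracket_tprod, map_sum,
        LinearMap.sum_apply, LinearMap.compl₁₂_apply, LinearMap.sub_apply, LinearMap.flip_apply,
        LinearMap.mul_apply', Module.End.mul_apply, leftMultiplication_tprod]
      exact eq_sub_of_add_eq hFI_snoc.symm
  exact LinearMap.congr_fun₂ hbilinear U W

theorem tensorForm_tensorBracket
    (hFI : ∀ (u : Fin (m + 1) → V) (v : Fin (m + 2) → V),
      br (Fin.snoc u (br v)) = ∑ i, br (update v i (br (Fin.snoc u (v i)))))
    (hUnit : ∀ u w : Fin (m + 1) → V, ∑ i, S (update w i (br (Fin.snoc u (w i)))) = 0)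
    (U W Z : ⨂[R] _ : Fin (m + 1), V) :
    tensorForm br S U (tensorBracket br W Z) = tensorForm br S (tensorBracket br U W) Z := by
  calc tensorForm br S U (tensorBracket br W Z)
    _ = PiTensorProduct.lift S (factorAction 0 (leftMultiplication br U)
          (derivationAction (leftMultiplication br W) Z)) := rfl
    _ = PiTensorProduct.lift S (factorAction 0
          ⁅leftMultiplication br U, leftMultiplication br W⁆ Z) :=
        (map_factorAction_lie_of_comp_derivationAction_eq_zero
          (lift_comp_derivationAction_leftMultiplication_eq_zero hUnit W) 0 _ Z).symm
    _ = PiTensorProduct.lift S (factorAction 0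
          (leftMultiplication br (tensorBracket br U W)) Z) := by
        rw [leftMultiplication_tensorBracket hFI]
    _ = tensorForm br S (tensorBracket br U W) Z := rfl

theorem statement7_general
    (hFI : ∀ (u : Fin (m + 1) → V) (v : Fin (m + 2) → V),
      br (Fin.snoc u (br v)) = ∑ i, br (update v i (br (Fin.snoc u (v i)))))
    (hUnit : ∀ u w : Fin (m + 1) → V, ∑ i, S (update w i (br (Fin.snoc u (w i)))) = 0)
    (hSymCond : ∀ u v : Fin (m + 1) → V,
      S (update v 0 (br (Fin.snoc u (v 0)))) = S (update u 0 (br (Fin.snoc v (u 0)))))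
    (B : (⨂[R] _ : Fin (m + 1), V) →ₗ[R] (⨂[R] _ : Fin (m + 1), V) →ₗ[R] M)
    (hB : ∀ u v, B (PiTensorProduct.tprod R u) (PiTensorProduct.tprod R v) =
      S (update v 0 (br (Fin.snoc u (v 0)))))
    (brF : (⨂[R] _ : Fin (m + 1), V) →ₗ[R] (⨂[R] _ : Fin (m + 1), V) →ₗ[R]
      ⨂[R] _ : Fin (m + 1), V)
    (hbrF : ∀ u v, brF (PiTensorProduct.tprod R u) (PiTensorProduct.tprod R v) =
      ∑ i, PiTensorProduct.tprod R (update v i (br (Fin.snoc u (v i))))) :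
    (∀ U W, B U W = B W U) ∧ ∀ U W Z, B U (brF W Z) = B (brF U W) Z := by
  obtain rfl : B = tensorForm br S :=
    bilinear_ext_tprod fun u v => (hB u v).trans (tensorForm_tprod u v).symm
  obtain rfl : brF = tensorBracket br :=
    bilinear_ext_tprod fun u v => (hbrF u v).trans (tensorBracket_tprod u v).symm
  exact ⟨tensorForm_comm hSymCond, tensorForm_tensorBracket hFI hUnit⟩

end Commutator

/-- Let `n = m + 2 ≥ 2` and let `(V, [·,…,·], S)` be a generalized metric
`n`-Leibniz algebra over `ℝ`.  Let `B` be the bilinear form on the `(n-1)`-fold tensor power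
`T` determined on pure tensors by
`B(u₁⊗⋯⊗u_{n-1}, v₁⊗⋯⊗v_{n-1}) = S([u₁,…,u_{n-1},v₁], v₂,…,v_{n-1})`, and let `[·,·]_F` be
the bracket on `T` determined on pure tensors by
`[u₁⊗⋯⊗u_{n-1}, v₁⊗⋯⊗v_{n-1}]_F = Σᵢ v₁⊗⋯⊗[u₁,…,u_{n-1},v_i]⊗⋯⊗v_{n-1}`.
Then `B` is symmetric and associative-invariant: `B(U, [W,Z]_F) = B([U,W]_F, Z)`. -/
theorem statement7 (m : ℕ) {V : Type*} [AddCommGroup V] [Module ℝ V]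
    (br : MultilinearMap ℝ (fun _ : Fin (m + 2) => V) V)
    (S : MultilinearMap ℝ (fun _ : Fin (m + 1) => V) ℝ)
    -- fundamental identity
    (hFI : ∀ (u : Fin (m + 1) → V) (v : Fin (m + 2) → V),
      br (Fin.snoc u (br v)) =
        ∑ i : Fin (m + 2), br (Function.update v i (br (Fin.snoc u (v i)))))
    -- `S` is symmetric
    (hSsymm : ∀ (σ : Equiv.Perm (Fin (m + 1))) (w : Fin (m + 1) → V), S (w ∘ σ) = S w)
    -- `S` is non-degenerate
    (hSnd : ∀ u : V, (∀ w : Fin (m + 1) → V, S (Function.update w 0 u) = 0) → u = 0)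
    -- unitarity condition
    (hUnit : ∀ (u w : Fin (m + 1) → V),
      ∑ i : Fin (m + 1), S (Function.update w i (br (Fin.snoc u (w i)))) = 0)
    -- symmetry condition
    (hSymCond : ∀ (u v : Fin (m + 1) → V),
      S (Function.update v 0 (br (Fin.snoc u (v 0)))) =
        S (Function.update u 0 (br (Fin.snoc v (u 0)))))
    -- the bilinear form `B` on the tensor power, determined on pure tensors
    (B : PiTensorProduct ℝ (fun _ : Fin (m + 1) => V) →ₗ[ℝ]
      PiTensorProduct ℝ (fun _ : Fin (m + 1) => V) →ₗ[ℝ] ℝ)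
    (hB : ∀ u v : Fin (m + 1) → V,
      B (PiTensorProduct.tprod ℝ u) (PiTensorProduct.tprod ℝ v) =
        S (Function.update v 0 (br (Fin.snoc u (v 0)))))
    -- the bilinear bracket `[·,·]_F` on the tensor power, determined on pure tensors
    (brF : PiTensorProduct ℝ (fun _ : Fin (m + 1) => V) →ₗ[ℝ]
      PiTensorProduct ℝ (fun _ : Fin (m + 1) => V) →ₗ[ℝ]
        PiTensorProduct ℝ (fun _ : Fin (m + 1) => V))
    (hbrF : ∀ u v : Fin (m + 1) → V,
      brF (PiTensorProduct.tprod ℝ u) (PiTensorProduct.tprod ℝ v) =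
        ∑ i : Fin (m + 1),
          PiTensorProduct.tprod ℝ (Function.update v i (br (Fin.snoc u (v i))))) :
    (∀ U W : PiTensorProduct ℝ (fun _ : Fin (m + 1) => V), B U W = B W U) ∧
    (∀ U W Z : PiTensorProduct ℝ (fun _ : Fin (m + 1) => V),
      B U (brF W Z) = B (brF U W) Z) :=
  statement7_general hFI hUnit hSymCond B hB brF hbrF
end

section
/- Let n ≥ 2 and let (V, [·,…,·], S) be a generalized metric n-Leibniz algebra over ℝ. Let d_V ∈ gl(V) be a generalized orthogonal derivation, i.e. d_V[u₁,…,u_n] = Σ_{i=1}^{n}[u₁,…,d_V u_i,…,u_n] and Σ_{i=1}^{n-1} S(v₁,…,d_V v_i,…,v_{n-1}) = 0 for all arguments in V. Let D(u₁,…,u_{n-1}) ∈ gl(V) be given by D(u₁,…,u_{n-1})v = [u₁,…,u_{n-1},v], let g be the linear span of {D(u₁,…,u_{n-1})} in gl(V), and let ω be the bilinear form on g with ω(D(u₁,…,u_{n-1}),D(v₁,…,v_{n-1})) = S([u₁,…,u_{n-1},v₁],v₂,…,v_{n-1}). Then: (i) for each x ∈ g the commutator [d_V, x] lies in g, and the map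 d_g(x) := [d_V, x] satisfies d_g(D(w₁,…,w_{n-1})) = Σ_{i=1}^{n-1} D(w₁,…,d_V w_i,…,w_{n-1}); (ii) d_g is a derivation of the Lie algebra g; and (iii) d_g is orthogonal: ω(d_g x, y) + ω(x, d_g y) = 0 for all x,y ∈ g. -/
open Function

/-!
Everything follows from how an endomorphism `d` acts infinitesimally on multilinear maps. The
bracket is annihilated by this action; splitting off the last slot of the bracket turns this into
`⁅d, D w⁆ = ∑ i, D (…, d wᵢ, …)`, so `ad d` preserves the span of the `D w`.

By linearity in the first argument, `ω x (D v) = S(x v₁, v₂, …)` for every `x` in the span.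
Summing `S(…, d wᵢ, …)` over `i` for `w = (x v₁, v₂, …)` and commuting `d` past `x` in the first
slot rewrites the invariance of `S` as `ω ⁅d, x⁆ (D v) + ω x ⁅d, D v⁆ = 0`, and the elements `D v`
span.
-/

section CommSemiring

variable {R ι V W : Type*} [CommSemiring R] [DecidableEq ι]
  [AddCommMonoid V] [Module R V] [AddCommMonoid W] [Module R W]

section Fintype

variable [Fintype ι]

/-- The multilinear map `f` intertwines the endomorphism `d` of its arguments, extended to tuples
by the Leibniz rule, with the endomorphism `δ` of its values. For an `n`-bracket and `δ = d` this
says that `d` is a derivation; for a form and `δ = 0` it says that `d` is generalized orthogonal. -/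
def IsLeibnizEquivariant (f : MultilinearMap R (fun _ : ι => V) W)
    (d : Module.End R V) (δ : Module.End R W) : Prop :=
  ∀ w : ι → V, δ (f w) = ∑ i, f (update w i (d (w i)))

namespace IsLeibnizEquivariant

theorem span_range_mem_invtSubmodule {f : MultilinearMap R (fun _ : ι => V) W}
    {d : Module.End R V} {δ : Module.End R W} (hf : IsLeibnizEquivariant f d δ) :
    Submodule.span R (Set.range f) ∈ δ.invtSubmodule := by
  rw [Module.End.mem_invtSubmodule, Submodule.span_le]
  rintro _ ⟨w, rfl⟩
  rw [SetLike.mem_coe, Submodule.mem_comap, hf w]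
  exact Submodule.sum_mem _ fun i _ => Submodule.subset_span (Set.mem_range_self _)

end IsLeibnizEquivariant

end Fintype

theorem form_apply_generator {D : MultilinearMap R (fun _ : ι => V) (Module.End R V)}
    {S : MultilinearMap R (fun _ : ι => V) W} {i₀ : ι}
    {ω : Submodule.span R (Set.range D) →ₗ[R] Submodule.span R (Set.range D) →ₗ[R] W}
    (hω : ∀ u v, ω ⟨D u, Submodule.subset_span ⟨u, rfl⟩⟩ ⟨D v, Submodule.subset_span ⟨v, rfl⟩⟩ =
      S (update v i₀ (D u (v i₀))))
    (x : Submodule.span R (Set.range D)) (v : ι → V) :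
    ω x ⟨D v, Submodule.subset_span ⟨v, rfl⟩⟩ =
      S (update v i₀ ((x : Module.End R V) (v i₀))) := by
  have linear_in_x : ω.flip ⟨D v, Submodule.subset_span ⟨v, rfl⟩⟩ =
      S.toLinearMap v i₀ ∘ₗ LinearMap.applyₗ (v i₀) ∘ₗ Submodule.subtype _ := by
    rw [Submodule.linearMap_eq_iff_of_eq_span _ _ rfl]
    rintro ⟨_, u, rfl⟩
    exact hω u v
  exact LinearMap.congr_fun linear_in_x x

end CommSemiring

section CommRing

attribute [local instance] LieRing.ofAssociativeRing

variable {R V M : Type*} [CommRing R] [AddCommGroup V] [Module R V] [AddCommGroup M] [Module R M]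

namespace IsLeibnizEquivariant

theorem curryRight {n : ℕ} {br : MultilinearMap R (fun _ : Fin (n + 1) => V) V}
    {d : Module.End R V} (hbr : IsLeibnizEquivariant br d d) :
    IsLeibnizEquivariant br.curryRight d (LieAlgebra.ad R (Module.End R V) d) := by
  intro w
  ext x
  have leibniz : d (br (Fin.snoc w x)) =
      ∑ i, br (Fin.snoc (update w i (d (w i))) x) + br (Fin.snoc w (d x)) := by
    simpa only [Fin.sum_univ_castSucc, Fin.snoc_castSucc, Fin.snoc_last, Fin.snoc_update,
      Fin.update_snoc_last] using hbr (Fin.snoc w x)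
  simp only [LieAlgebra.ad_apply, Ring.lie_def, LinearMap.sub_apply, Module.End.mul_apply,
    LinearMap.sum_apply, MultilinearMap.curryRight_apply]
  exact sub_eq_of_eq_add leibniz

variable {ι : Type*} [Fintype ι] [DecidableEq ι]

theorem apply_update_lie_add_sum {S : MultilinearMap R (fun _ : ι => V) M} {d : Module.End R V}
    (hS : IsLeibnizEquivariant S d 0) (x : Module.End R V) (i₀ : ι) (v : ι → V) :
    S (update v i₀ (⁅d, x⁆ (v i₀))) +
      ∑ i, S (update (update v i (d (v i))) i₀ (x (update v i (d (v i)) i₀))) = 0 := by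
  have off_slot (i : ι) (hi : i ∈ Finset.univ.erase i₀) :
      S (update (update v i (d (v i))) i₀ (x (update v i (d (v i)) i₀))) =
        S (update (update v i₀ (x (v i₀))) i (d (update v i₀ (x (v i₀)) i))) := by
    have hne : i ≠ i₀ := Finset.ne_of_mem_erase hi
    rw [update_of_ne hne.symm, update_of_ne hne, update_comm hne]
  have invariance := hS (update v i₀ (x (v i₀)))
  rw [LinearMap.zero_apply, ← Finset.add_sum_erase _ _ (Finset.mem_univ i₀)] at invariance
  rw [← Finset.add_sum_erase _ _ (Finset.mem_univ i₀), Finset.sum_congr rfl off_slot]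
  simp only [update_self, update_idem] at invariance ⊢
  rw [Ring.lie_def, LinearMap.sub_apply, Module.End.mul_apply, Module.End.mul_apply,
    S.map_update_sub, ← add_assoc, sub_add_cancel]
  exact invariance.symm

end IsLeibnizEquivariant

theorem form_lie_add_form_lie_eq_zero {ι : Type*} [Fintype ι] [DecidableEq ι]
    {D : MultilinearMap R (fun _ : ι => V) (Module.End R V)}
    {S : MultilinearMap R (fun _ : ι => V) M} {i₀ : ι} {d : Module.End R V}
    {ω : Submodule.span R (Set.range D) →ₗ[R] Submodule.span R (Set.range D) →ₗ[R] M}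
    (hD : IsLeibnizEquivariant D d (LieAlgebra.ad R (Module.End R V) d))
    (hS : IsLeibnizEquivariant S d 0)
    (hω : ∀ u v, ω ⟨D u, Submodule.subset_span ⟨u, rfl⟩⟩ ⟨D v, Submodule.subset_span ⟨v, rfl⟩⟩ =
      S (update v i₀ (D u (v i₀))))
    (x y : Submodule.span R (Set.range D))
    (hx : ⁅d, (x : Module.End R V)⁆ ∈ Submodule.span R (Set.range D))
    (hy : ⁅d, (y : Module.End R V)⁆ ∈ Submodule.span R (Set.range D)) :
    ω ⟨⁅d, (x : Module.End R V)⁆, hx⟩ y + ω x ⟨⁅d, (y : Module.End R V)⁆, hy⟩ = 0 := by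
  let adSpan : Module.End R (Submodule.span R (Set.range D)) :=
    (LieAlgebra.ad R (Module.End R V) d).restrict hD.span_range_mem_invtSubmodule
  suffices skew : ω (adSpan x) + ω x ∘ₗ adSpan = 0 from LinearMap.congr_fun skew y
  rw [Submodule.linearMap_eq_zero_iff_of_eq_span _ rfl]
  rintro ⟨_, v, rfl⟩
  have adSpan_generator : adSpan ⟨D v, Submodule.subset_span ⟨v, rfl⟩⟩ =
      ∑ i, ⟨D (update v i (d (v i))), Submodule.subset_span ⟨_, rfl⟩⟩ := by
    apply Subtype.ext
    rw [AddSubmonoidClass.coe_finsetSum]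
    exact hD v
  rw [LinearMap.add_apply, LinearMap.comp_apply, adSpan_generator, map_sum]
  simp only [form_apply_generator hω]
  exact hS.apply_update_lie_add_sum x i₀ v

theorem statement14_general {n : ℕ} (br : MultilinearMap R (fun _ : Fin (n + 1) => V) V)
    (S : MultilinearMap R (fun _ : Fin n => V) M) (i₀ : Fin n) (d : Module.End R V)
    (hbr : IsLeibnizEquivariant br d d) (hS : IsLeibnizEquivariant S d 0)
    (ω : Submodule.span R (Set.range br.curryRight) →ₗ[R]
      Submodule.span R (Set.range br.curryRight) →ₗ[R] M)
    (hω : ∀ u v : Fin n → V,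
      ω ⟨br.curryRight u, Submodule.subset_span ⟨u, rfl⟩⟩
          ⟨br.curryRight v, Submodule.subset_span ⟨v, rfl⟩⟩ =
        S (update v i₀ (br (Fin.snoc u (v i₀))))) :
    ((∀ x ∈ Submodule.span R (Set.range br.curryRight),
        ⁅d, x⁆ ∈ Submodule.span R (Set.range br.curryRight)) ∧
      ∀ w : Fin n → V, ⁅d, br.curryRight w⁆ = ∑ i, br.curryRight (update w i (d (w i)))) ∧
    (∀ x y : Module.End R V, ⁅d, ⁅x, y⁆⁆ = ⁅⁅d, x⁆, y⁆ + ⁅x, ⁅d, y⁆⁆) ∧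
    ∀ (x y : Submodule.span R (Set.range br.curryRight))
      (hx : ⁅d, (x : Module.End R V)⁆ ∈ Submodule.span R (Set.range br.curryRight))
      (hy : ⁅d, (y : Module.End R V)⁆ ∈ Submodule.span R (Set.range br.curryRight)),
      ω ⟨⁅d, (x : Module.End R V)⁆, hx⟩ y + ω x ⟨⁅d, (y : Module.End R V)⁆, hy⟩ = 0 :=
  ⟨⟨hbr.curryRight.span_range_mem_invtSubmodule, hbr.curryRight⟩, leibniz_lie d,
    form_lie_add_form_lie_eq_zero hbr.curryRight hS hω⟩

end CommRing

/-- Let `n = m + 2 ≥ 2`, let `(V, [·,…,·], S)` be a generalized metric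
`n`-Leibniz algebra over `ℝ` and let `d_V ∈ gl(V)` be a generalized orthogonal derivation.
Let `g` be the span of the operators `D(u₁,…,u_{n-1})` in `gl(V)` and let `ω` be the bilinear
form on `g` with `ω(D(u₁,…,u_{n-1}), D(v₁,…,v_{n-1})) = S([u₁,…,u_{n-1},v₁],v₂,…,v_{n-1})`.
Then: (i) `d_g(x) := [d_V, x]` maps `g` to `g` and
`d_g(D(w₁,…,w_{n-1})) = Σᵢ D(w₁,…,d_V wᵢ,…,w_{n-1})`; (ii) `d_g` is a derivation of the Lie
algebra `g`; (iii) `d_g` is orthogonal: `ω(d_g x, y) + ω(x, d_g y) = 0`. -/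
theorem statement14 (m : ℕ) {V : Type*} [AddCommGroup V] [Module ℝ V]
    (br : MultilinearMap ℝ (fun _ : Fin (m + 2) => V) V)
    (S : MultilinearMap ℝ (fun _ : Fin (m + 1) => V) ℝ)
    -- fundamental identity
    (hFI : ∀ (u : Fin (m + 1) → V) (v : Fin (m + 2) → V),
      br (Fin.snoc u (br v)) =
        ∑ i : Fin (m + 2), br (Function.update v i (br (Fin.snoc u (v i)))))
    -- `S` is symmetric
    (hSsymm : ∀ (σ : Equiv.Perm (Fin (m + 1))) (w : Fin (m + 1) → V), S (w ∘ σ) = S w)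
    -- `S` is non-degenerate
    (hSnd : ∀ u : V, (∀ w : Fin (m + 1) → V, S (Function.update w 0 u) = 0) → u = 0)
    -- unitarity condition
    (hUnit : ∀ (u w : Fin (m + 1) → V),
      ∑ i : Fin (m + 1), S (Function.update w i (br (Fin.snoc u (w i)))) = 0)
    -- symmetry condition
    (hSymCond : ∀ (u v : Fin (m + 1) → V),
      S (Function.update v 0 (br (Fin.snoc u (v 0)))) =
        S (Function.update u 0 (br (Fin.snoc v (u 0)))))
    -- `d_V` is a derivation of the `n`-bracket
    (dV : Module.End ℝ V)
    (hdVder : ∀ w : Fin (m + 2) → V,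
      dV (br w) = ∑ i : Fin (m + 2), br (Function.update w i (dV (w i))))
    -- `d_V` is generalized orthogonal
    (hdVorth : ∀ w : Fin (m + 1) → V,
      ∑ i : Fin (m + 1), S (Function.update w i (dV (w i))) = 0)
    -- the bilinear form `ω` on `g`, determined on the generators `D(u₁,…,u_{n-1})`
    (ω : (gSpan m br : Submodule ℝ (Module.End ℝ V)) →ₗ[ℝ]
      (gSpan m br : Submodule ℝ (Module.End ℝ V)) →ₗ[ℝ] ℝ)
    (hω : ∀ u v : Fin (m + 1) → V,
      ω ⟨Dop m br u, Submodule.subset_span ⟨u, rfl⟩⟩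
          ⟨Dop m br v, Submodule.subset_span ⟨v, rfl⟩⟩ =
        S (Function.update v 0 (br (Fin.snoc u (v 0))))) :
    -- (i) `d_g = [d_V, ·]` maps `g` to `g` and acts on generators as expected
    ((∀ x ∈ gSpan m br, ⁅dV, x⁆ ∈ gSpan m br) ∧
      (∀ w : Fin (m + 1) → V,
        ⁅dV, Dop m br w⁆ =
          ∑ i : Fin (m + 1), Dop m br (Function.update w i (dV (w i))))) ∧
    -- (ii) `d_g` is a derivation of the Lie algebra `g`
    (∀ x ∈ gSpan m br, ∀ y ∈ gSpan m br,
      ⁅dV, ⁅x, y⁆⁆ = ⁅⁅dV, x⁆, y⁆ + ⁅x, ⁅dV, y⁆⁆) ∧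
    -- (iii) `d_g` is orthogonal with respect to `ω`
    (∀ (x y : gSpan m br)
        (hx : ⁅dV, (x : Module.End ℝ V)⁆ ∈ gSpan m br)
        (hy : ⁅dV, (y : Module.End ℝ V)⁆ ∈ gSpan m br),
      ω ⟨⁅dV, (x : Module.End ℝ V)⁆, hx⟩ y + ω x ⟨⁅dV, (y : Module.End ℝ V)⁆, hy⟩ = 0) := by
  -- `Dop m br` and `gSpan m br` are definitionally `br.curryRight` and the span of its range.
  obtain ⟨hi, hii, hiii⟩ :=
    statement14_general br S 0 dV hdVder (fun w => (hdVorth w).symm) ω hω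
  exact ⟨hi, fun x _ y _ => hii x y, hiii⟩
end

section
/- Let n ≥ 2 and let (V, [·,…,·], S) be a generalized metric n-Leibniz algebra over ℝ. Let Φ_V : V → V be an invertible linear map that is a generalized orthogonal automorphism, i.e. Φ_V[u₁,…,u_n] = [Φ_V u₁,…,Φ_V u_n] and S(Φ_V v₁,…,Φ_V v_{n-1}) = S(v₁,…,v_{n-1}) for all arguments in V. Let D(u₁,…,u_{n-1}) ∈ gl(V) be given by D(u₁,…,u_{n-1})v = [u₁,…,u_{n-1},v], let g be the linear span of {D(u₁,…,u_{n-1})} in gl(V), and let ω be the bilinear form on g with ω(D(u₁,…,u_{n-1}),D(v₁,…,v_{n-1})) = S([u₁,…,u_{n-1},v₁],v₂,…,v_{n-1}). Then: (i) for each x ∈ g, Φ_V ∘ x ∘ Φ_V^{-1} lies in g, and the map Φ_g(x) := Φ_V ∘ x ∘ Φ_V^{-1} satisfies Φ_g(D(w₁,…,w_{n-1})) = D(Φ_V w₁,…,Φ_V w_{n-1}); (ii) Φ_g is a Lie algebra automorphism of g; and (iii) Φ_g is orthogonal: ω(Φ_g x, Φ_g y) = ω(x,y) for all x,y ∈ g.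 -/
/-!
An isomorphism `Φ` of `n`-brackets intertwines `D(u₁,…,u_{n-1})` with `D(Φ u₁,…,Φ u_{n-1})`, so
conjugation by `Φ` permutes the generators of `g` and therefore maps `g` onto `g`. On generators
`ω` is computed by the bracket and `S`, both of which `Φ` preserves, and a bilinear form on `g` is
determined by its values on generators.
-/

open Function

/-- Conjugation `x ↦ Φ_V ∘ x ∘ Φ_V⁻¹` on `gl(V)` by an invertible linear map `Φ_V`. -/
def conjEnd {V : Type*} [AddCommGroup V] [Module ℝ V] (Φ : V ≃ₗ[ℝ] V)
    (x : Module.End ℝ V) : Module.End ℝ V :=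
  Φ.toLinearMap ∘ₗ x ∘ₗ Φ.symm.toLinearMap

namespace NBracket

variable {R V W : Type*} [CommSemiring R] [AddCommMonoid V] [Module R V]
  [AddCommMonoid W] [Module R W] {n : ℕ} (μ : MultilinearMap R (fun _ : Fin (n + 1) => V) V)
  (ν : MultilinearMap R (fun _ : Fin (n + 1) => W) W)

/-- The linear span `g ⊆ gl(V)` of the operators `D(u) = [u₁,…,u_{n-1}, ·]`, for a bracket over an
arbitrary commutative semiring. The operator `D(u)` is encoded as `μ.curryRight u`. -/
def adSpan : Submodule R (Module.End R V) :=
  Submodule.span R (Set.range μ.curryRight)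

/-- The operator `D(u)` as an element of its span `g`. -/
def ad (u : Fin n → V) : adSpan μ :=
  ⟨μ.curryRight u, Submodule.subset_span ⟨u, rfl⟩⟩

variable {μ ν}

theorem map_curryRight_apply {Φ : V → W} (hΦ : ∀ w, Φ (μ w) = ν (Φ ∘ w)) (u : Fin n → V) (v : V) :
    Φ (μ.curryRight u v) = ν.curryRight (Φ ∘ u) (Φ v) := by
  simp only [MultilinearMap.curryRight_apply, hΦ, Fin.comp_snoc]

theorem map_update_curryRight {P : Type*} {S : (Fin n → V) → P} {T : (Fin n → W) → P} {Φ : V → W}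
    (hΦ : ∀ w, Φ (μ w) = ν (Φ ∘ w)) (hST : ∀ w, T (Φ ∘ w) = S w) (i : Fin n) (u v : Fin n → V) :
    T (update (Φ ∘ v) i (ν.curryRight (Φ ∘ u) (Φ (v i)))) =
      S (update v i (μ.curryRight u (v i))) := by
  rw [← map_curryRight_apply hΦ, ← comp_update, hST]

variable {Φ : V ≃ₗ[R] W}

theorem conj_curryRight (hΦ : ∀ w, Φ (μ w) = ν (Φ ∘ w)) (u : Fin n → V) :
    Φ.conj (μ.curryRight u) = ν.curryRight (Φ ∘ u) := by
  ext v
  rw [LinearEquiv.conj_apply_apply, map_curryRight_apply hΦ, Φ.apply_symm_apply]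

theorem map_conj_adSpan (hΦ : ∀ w, Φ (μ w) = ν (Φ ∘ w)) :
    (adSpan μ).map Φ.conj.toLinearMap = adSpan ν := by
  have image_generators : Φ.conj '' Set.range μ.curryRight = Set.range ν.curryRight := calc
    _ = Set.range (ν.curryRight ∘ (Φ ∘ ·)) := by
      rw [← Set.range_comp]
      exact congrArg Set.range (funext (conj_curryRight hΦ))
    _ = Set.range ν.curryRight := Φ.surjective.comp_left.range_comp _
  exact (Submodule.map_span _ _).trans (congrArg (Submodule.span R) image_generators)

/-- The isomorphism `Φ_g : g_V ≃ g_W`, `x ↦ Φ ∘ x ∘ Φ⁻¹`, induced by an isomorphism `Φ : V ≃ W` of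
brackets. -/
def adSpanCongr (hΦ : ∀ w, Φ (μ w) = ν (Φ ∘ w)) : adSpan μ ≃ₗ[R] adSpan ν :=
  Φ.conj.ofSubmodules _ _ (map_conj_adSpan hΦ)

theorem adSpanCongr_ad (hΦ : ∀ w, Φ (μ w) = ν (Φ ∘ w)) (u : Fin n → V) :
    adSpanCongr hΦ (ad μ u) = ad ν (Φ ∘ u) :=
  Subtype.ext (conj_curryRight hΦ u)

section BilinearForm

variable {P : Type*} [AddCommMonoid P] [Module R P]

theorem adSpan_bilin_ext {B C : adSpan μ →ₗ[R] adSpan μ →ₗ[R] P}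
    (h : ∀ u v, B (ad μ u) (ad μ v) = C (ad μ u) (ad μ v)) : B = C := by
  refine (Submodule.linearMap_eq_iff_of_eq_span B C rfl).2 ?_
  rintro ⟨_, u, rfl⟩
  refine (Submodule.linearMap_eq_iff_of_eq_span _ _ rfl).2 ?_
  rintro ⟨_, v, rfl⟩
  exact h u v

theorem bilin_adSpanCongr {S : (Fin n → V) → P} {T : (Fin n → W) → P}
    (hΦ : ∀ w, Φ (μ w) = ν (Φ ∘ w)) (hST : ∀ w, T (Φ ∘ w) = S w) (i : Fin n)
    {ω : adSpan μ →ₗ[R] adSpan μ →ₗ[R] P} {η : adSpan ν →ₗ[R] adSpan ν →ₗ[R] P}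
    (hω : ∀ u v, ω (ad μ u) (ad μ v) = S (update v i (μ.curryRight u (v i))))
    (hη : ∀ u v, η (ad ν u) (ad ν v) = T (update v i (ν.curryRight u (v i))))
    (x y : adSpan μ) :
    η (adSpanCongr hΦ x) (adSpanCongr hΦ y) = ω x y := by
  suffices h : η.compl₁₂ (adSpanCongr hΦ).toLinearMap (adSpanCongr hΦ).toLinearMap = ω from
    LinearMap.congr_fun₂ h x y
  refine adSpan_bilin_ext fun u v => ?_
  calc η (adSpanCongr hΦ (ad μ u)) (adSpanCongr hΦ (ad μ v))
    _ = η (ad ν (Φ ∘ u)) (ad ν (Φ ∘ v)) := by simp only [adSpanCongr_ad]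
    _ = T (update (Φ ∘ v) i (ν.curryRight (Φ ∘ u) (Φ (v i)))) := hη _ _
    _ = S (update v i (μ.curryRight u (v i))) := map_update_curryRight hΦ hST i u v
    _ = ω (ad μ u) (ad μ v) := (hω u v).symm

end BilinearForm

theorem conj_lie {R V W : Type*} [CommRing R] [AddCommGroup V] [Module R V] [AddCommGroup W]
    [Module R W] (Φ : V ≃ₗ[R] W) (x y : Module.End R V) :
    Φ.conj ⁅x, y⁆ = ⁅Φ.conj x, Φ.conj y⁆ := by
  simp only [Ring.lie_def, map_sub, Module.End.mul_eq_comp, LinearEquiv.conj_comp]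

end NBracket

open NBracket in
theorem statement17_general {R V W P : Type*} [CommRing R] [AddCommGroup V] [Module R V]
    [AddCommGroup W] [Module R W] [AddCommMonoid P] [Module R P] {n : ℕ}
    (μ : MultilinearMap R (fun _ : Fin (n + 1) => V) V)
    (ν : MultilinearMap R (fun _ : Fin (n + 1) => W) W)
    (i : Fin n) (S : (Fin n → V) → P) (T : (Fin n → W) → P) (Φ : V ≃ₗ[R] W)
    (hΦ : ∀ w, Φ (μ w) = ν (Φ ∘ w)) (hST : ∀ w, T (Φ ∘ w) = S w)
    (ω : adSpan μ →ₗ[R] adSpan μ →ₗ[R] P) (η : adSpan ν →ₗ[R] adSpan ν →ₗ[R] P)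
    (hω : ∀ u v, ω (ad μ u) (ad μ v) = S (update v i (μ.curryRight u (v i))))
    (hη : ∀ u v, η (ad ν u) (ad ν v) = T (update v i (ν.curryRight u (v i)))) :
    ((∀ x ∈ adSpan μ, Φ.conj x ∈ adSpan ν) ∧
      (∀ u, Φ.conj (μ.curryRight u) = ν.curryRight (Φ ∘ u))) ∧
    ((∀ x ∈ adSpan μ, ∀ y ∈ adSpan μ, Φ.conj ⁅x, y⁆ = ⁅Φ.conj x, Φ.conj y⁆) ∧
      (∀ y ∈ adSpan ν, ∃ x ∈ adSpan μ, Φ.conj x = y)) ∧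
    (∀ (x y : adSpan μ) (hx : Φ.conj (x : Module.End R V) ∈ adSpan ν)
        (hy : Φ.conj (y : Module.End R V) ∈ adSpan ν),
      η ⟨Φ.conj x, hx⟩ ⟨Φ.conj y, hy⟩ = ω x y) := by
  refine ⟨⟨fun x hx => ?_, conj_curryRight hΦ⟩, ⟨fun x _ y _ => conj_lie Φ x y, ?_⟩, ?_⟩
  · exact (adSpanCongr hΦ ⟨x, hx⟩).2
  · exact fun y hy => Submodule.mem_map.1 ((map_conj_adSpan hΦ).ge hy)
  · exact fun x y _ _ => bilin_adSpanCongr hΦ hST i hω hη x y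

/-- Let `n = m + 2 ≥ 2`, let `(V, [·,…,·], S)` be a generalized metric
`n`-Leibniz algebra over `ℝ` and let `Φ_V` be a generalized orthogonal automorphism.  Let `g`
be the span of the operators `D(u₁,…,u_{n-1})` in `gl(V)` and let `ω` be the bilinear form on
`g` with `ω(D(u₁,…,u_{n-1}), D(v₁,…,v_{n-1})) = S([u₁,…,u_{n-1},v₁],v₂,…,v_{n-1})`.  Then:
(i) `Φ_g(x) := Φ_V ∘ x ∘ Φ_V⁻¹` maps `g` to `g` and
`Φ_g(D(w₁,…,w_{n-1})) = D(Φ_V w₁,…,Φ_V w_{n-1})`; (ii) `Φ_g` is a Lie algebra automorphism of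
`g`; (iii) `Φ_g` is orthogonal: `ω(Φ_g x, Φ_g y) = ω(x, y)`. -/
theorem statement17 (m : ℕ) {V : Type*} [AddCommGroup V] [Module ℝ V]
    (br : MultilinearMap ℝ (fun _ : Fin (m + 2) => V) V)
    (S : MultilinearMap ℝ (fun _ : Fin (m + 1) => V) ℝ)
    -- fundamental identity
    (hFI : ∀ (u : Fin (m + 1) → V) (v : Fin (m + 2) → V),
      br (Fin.snoc u (br v)) =
        ∑ i : Fin (m + 2), br (Function.update v i (br (Fin.snoc u (v i)))))
    -- `S` is symmetric
    (hSsymm : ∀ (σ : Equiv.Perm (Fin (m + 1))) (w : Fin (m + 1) → V), S (w ∘ σ) = S w)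
    -- `S` is non-degenerate
    (hSnd : ∀ u : V, (∀ w : Fin (m + 1) → V, S (Function.update w 0 u) = 0) → u = 0)
    -- unitarity condition
    (hUnit : ∀ (u w : Fin (m + 1) → V),
      ∑ i : Fin (m + 1), S (Function.update w i (br (Fin.snoc u (w i)))) = 0)
    -- symmetry condition
    (hSymCond : ∀ (u v : Fin (m + 1) → V),
      S (Function.update v 0 (br (Fin.snoc u (v 0)))) =
        S (Function.update u 0 (br (Fin.snoc v (u 0)))))
    -- `Φ_V` is an invertible linear map which is an automorphism of the `n`-bracket
    (ΦV : V ≃ₗ[ℝ] V)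
    (hΦbr : ∀ w : Fin (m + 2) → V, ΦV (br w) = br (fun i => ΦV (w i)))
    -- `Φ_V` preserves `S`
    (hΦS : ∀ w : Fin (m + 1) → V, S (fun i => ΦV (w i)) = S w)
    -- the bilinear form `ω` on `g`, determined on the generators `D(u₁,…,u_{n-1})`
    (ω : (gSpan m br : Submodule ℝ (Module.End ℝ V)) →ₗ[ℝ]
      (gSpan m br : Submodule ℝ (Module.End ℝ V)) →ₗ[ℝ] ℝ)
    (hω : ∀ u v : Fin (m + 1) → V,
      ω ⟨Dop m br u, Submodule.subset_span ⟨u, rfl⟩⟩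
          ⟨Dop m br v, Submodule.subset_span ⟨v, rfl⟩⟩ =
        S (Function.update v 0 (br (Fin.snoc u (v 0))))) :
    -- (i) `Φ_g = Φ_V ∘ · ∘ Φ_V⁻¹` maps `g` to `g` and acts on generators as expected
    ((∀ x ∈ gSpan m br, conjEnd ΦV x ∈ gSpan m br) ∧
      (∀ w : Fin (m + 1) → V,
        conjEnd ΦV (Dop m br w) = Dop m br (fun i => ΦV (w i)))) ∧
    -- (ii) `Φ_g` is a Lie algebra automorphism of `g`
    ((∀ x ∈ gSpan m br, ∀ y ∈ gSpan m br,
        conjEnd ΦV ⁅x, y⁆ = ⁅conjEnd ΦV x, conjEnd ΦV y⁆) ∧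
      (∀ y ∈ gSpan m br, ∃ x ∈ gSpan m br, conjEnd ΦV x = y)) ∧
    -- (iii) `Φ_g` is orthogonal with respect to `ω`
    (∀ (x y : gSpan m br)
        (hx : conjEnd ΦV (x : Module.End ℝ V) ∈ gSpan m br)
        (hy : conjEnd ΦV (y : Module.End ℝ V) ∈ gSpan m br),
      ω ⟨conjEnd ΦV (x : Module.End ℝ V), hx⟩ ⟨conjEnd ΦV (y : Module.End ℝ V), hy⟩ =
        ω x y) := by
  -- `Dop m br` unfolds to `br.curryRight`, and `conjEnd ΦV` to `ΦV.conj`.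
  exact statement17_general br br 0 S S ΦV hΦbr hΦS ω ω hω hω
end
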